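/- Let p ∈ (2, ∞). There exists a constant C_p > 0 (depending only on p) such that for every R ≥ 0 and all u, v ∈ H¹(ℝ², ℂ) one has ‖K₀ ∗ |u|² − K_R ∗ |v|²‖_p ≤ C_p ( ‖v‖_{H¹}² R + (‖u‖_{H¹} + ‖v‖_{H¹}) ‖u − v‖₂ ). -/

import Mathlib

noncomputable section
open MeasureTheory ENNReal
open scoped RealInnerProductSpace

/-- The plane `ℝ²`. -/
abbrev E2 : Type := EuclideanSpace ℝ (Fin 2)

/-- The rotation by 90 degrees: `x^⊥ = (-x₂, x₁)`. -/
def perp (x : E2) : E2 := (WithLp.equiv 2 (Fin 2 → ℝ)).symm ![-(x 1), x 0]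

/-- The Aharonov–Bohm kernel `K_R(x) = x^⊥ / (max R ‖x‖)²` (with `K_R 0 = 0`,
also when `R = 0`, by the junk-value convention `(0 : ℝ)⁻¹ = 0`). -/
def K (R : ℝ) (x : E2) : E2 := ((max R ‖x‖) ^ 2)⁻¹ • perp x

/-- The standard basis of `ℝ²`. -/
def e2 (j : Fin 2) : E2 := EuclideanSpace.single j 1

/-- Componentwise convolution of the vector kernel `K_R` with a scalar density. -/
def convKs (R : ℝ) (ρ : E2 → ℝ) (x : E2) : E2 := ∫ y, ρ y • K R (x - y)

/-- Convolution of the vector kernel `K_R` with a vector field, summed over components. -/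
def convKv (R : ℝ) (F : E2 → E2) (x : E2) : ℝ := ∫ y, ⟪K R (x - y), F y⟫

/-- The current `J[u] = i(u∇ū - ū∇u) = 2 Im(ū ∇u)`, an `ℝ²`-valued function. -/
def Jf (u : E2 → ℂ) (x : E2) : E2 :=
  (WithLp.equiv 2 (Fin 2 → ℝ)).symm fun j =>
    2 * ((starRingEnd ℂ) (u x) * fderiv ℝ u x (e2 j)).im

/-- The `H¹` norm `(‖u‖₂² + ‖∇u‖₂²)^{1/2}` (extended-real valued). -/
def H1 (u : E2 → ℂ) : ℝ≥0∞ :=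
  (eLpNorm u 2 volume ^ 2 + eLpNorm (fun x => fderiv ℝ u x) 2 volume ^ 2) ^ (1 / 2 : ℝ)

/-- The `H²` norm `(‖u‖₂² + ‖∇u‖₂² + ‖∇²u‖₂²)^{1/2}` (extended-real valued). -/
def H2 (u : E2 → ℂ) : ℝ≥0∞ :=
  (eLpNorm u 2 volume ^ 2 + eLpNorm (fun x => fderiv ℝ u x) 2 volume ^ 2
    + eLpNorm (fun x => fderiv ℝ (fderiv ℝ u) x) 2 volume ^ 2) ^ (1 / 2 : ℝ)

/-!
The kernel `K_R` is bounded by `1 / ‖x‖`, which in the plane lies in `L^s` near the origin for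
`s < 2` and in `L^p` at infinity for `p > 2`. Writing
`K₀ ∗ |u|² - K_R ∗ |v|² = K₀ ∗ (|u|² - |v|²) + (K₀ - K_R) ∗ |v|²`, Young's inequality for the two
pieces of `K₀` controls the first term by the `L^s` and `L¹` norms of `|u|² - |v|²`, where
`2 / s = 1 / p + 1`; Hölder's inequality for `(|u| + |v|) (|u| - |v|)` then extracts `‖u - v‖₂`.
In the second term `K₀ - K_R` is supported in the ball of radius `R`, and its `L¹` norm is
`R ‖K₀ - K₁‖₁` by homogeneity. The remaining `L^q` norms of `u` and `v` are bounded by the `H¹` norm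
through the planar inequality `‖f‖₂ ≤ ‖∇f‖₁` applied to the powers of `u`.
-/

open Filter Topology Set Module ContinuousLinearMap
open scoped Convolution NNReal

theorem ae_lt_top_of_eLpNorm_lt_top {α : Type*} [MeasurableSpace α] {μ : Measure α}
    {f : α → ℝ≥0∞} {p : ℝ≥0∞} (hf : AEMeasurable f μ) (hp : p ≠ 0) (h : eLpNorm f p μ < ∞) :
    ∀ᵐ x ∂μ, f x < ∞ := by
  rcases eq_or_ne p ∞ with rfl | hp'
  · rw [eLpNorm_exponent_top] at h
    exact ae_lt_of_essSup_lt h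
  · have hint := lintegral_rpow_enorm_lt_top_of_eLpNorm_lt_top hp hp' h
    filter_upwards [ae_lt_top' (hf.enorm.pow_const _) hint.ne] with x hx
    exact (ENNReal.rpow_lt_top_iff_of_pos (ENNReal.toReal_pos hp hp')).1 hx

theorem le_of_inv_add_inv_eq_inv_add_one {p q r : ℝ≥0∞} (hq : 1 ≤ q)
    (h : p⁻¹ + q⁻¹ = r⁻¹ + 1) : p ≤ r := by
  rw [← ENNReal.inv_le_inv, ← ENNReal.add_le_add_iff_right one_ne_top, ← h]
  gcongr
  exact ENNReal.inv_le_one.2 hq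

/-! ### Young's inequality -/

section Young

variable {G : Type*} [AddCommGroup G] [MeasurableSpace G] [MeasurableAdd₂ G] [MeasurableNeg G]
  {μ : Measure G} [SFinite μ] [μ.IsAddLeftInvariant]

variable {𝕜 E E' F : Type*} [NontriviallyNormedField 𝕜] [NormedAddCommGroup E] [NormedSpace 𝕜 E]
  [NormedAddCommGroup E'] [NormedSpace 𝕜 E'] [NormedAddCommGroup F] [NormedSpace 𝕜 F]

theorem lintegral_enorm_convolution_integrand_le {f : G → E} {g : G → E'}
    (L : E →L[𝕜] E' →L[𝕜] F) (hf : AEStronglyMeasurable f μ) (hg : AEStronglyMeasurable g μ)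
    (x : G) :
    ∫⁻ t, ‖L (f t) (g (x - t))‖ₑ ∂μ ≤ ‖L‖ₑ * ((‖f ·‖ₑ) ⋆ₗ[μ] (‖g ·‖ₑ)) x := by
  have hgx : AEMeasurable (fun t => ‖g (-t + x)‖ₑ) μ :=
    hg.enorm.comp_quasiMeasurePreserving (by fun_prop)
  rw [lconvolution_def, ← lintegral_const_mul'' ‖L‖ₑ (by exact hf.enorm.mul hgx)]
  refine lintegral_mono fun t => ?_
  rw [neg_add_eq_sub, ← mul_assoc]
  exact ((L (f t)).le_opENorm _).trans (by gcongr; exact L.le_opENorm _)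

theorem aestronglyMeasurable_convolution [NormedSpace ℝ F] {f : G → E} {g : G → E'}
    (L : E →L[𝕜] E' →L[𝕜] F) (hf : AEStronglyMeasurable f μ) (hg : AEStronglyMeasurable g μ) :
    AEStronglyMeasurable (f ⋆[L, μ] g) μ :=
  (hf.convolution_integrand L hg).integral_prod_right'

theorem lintegral_lconvolution {f g : G → ℝ≥0∞} (hf : AEMeasurable f μ) (hg : AEMeasurable g μ) :
    ∫⁻ x, (f ⋆ₗ[μ] g) x ∂μ = (∫⁻ x, f x ∂μ) * ∫⁻ x, g x ∂μ := by
  calc ∫⁻ x, (f ⋆ₗ[μ] g) x ∂μ = ∫⁻ y, ∫⁻ x, f y * g (-y + x) ∂μ ∂μ := by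
        simp only [lconvolution_def]
        exact lintegral_lintegral_swap (by fun_prop)
    _ = ∫⁻ y, f y * ∫⁻ x, g x ∂μ ∂μ := by
        refine lintegral_congr fun y => ?_
        rw [lintegral_const_mul'' _ (by fun_prop), lintegral_add_left_eq_self g]
    _ = (∫⁻ x, f x ∂μ) * ∫⁻ x, g x ∂μ := lintegral_mul_const'' _ hf

theorem eq_rpow_rpow_mul_rpow_rpow (a : ℝ≥0∞) {p r : ℝ} (hp : 0 < p) (hpr : p ≤ r) :
    a = (a ^ p) ^ r⁻¹ * (a ^ p) ^ (p⁻¹ - r⁻¹) := by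
  have hr : 0 < r := hp.trans_le hpr
  rw [← ENNReal.rpow_add_of_nonneg _ _ (by positivity) (sub_nonneg.2 (inv_anti₀ hp hpr)),
    add_sub_cancel, ENNReal.rpow_rpow_inv hp.ne']

variable [μ.IsNegInvariant]

theorem lconvolution_le_rpow_mul_rpow_mul_rpow {f g : G → ℝ≥0∞} (hf : AEMeasurable f μ)
    (hg : AEMeasurable g μ) {p q r : ℝ} (hp : 0 < p) (hq : 0 < q) (hpr : p ≤ r) (hqr : q ≤ r)
    (h : p⁻¹ + q⁻¹ = r⁻¹ + 1) (x : G) :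
    (f ⋆ₗ[μ] g) x ≤ ((fun y => f y ^ p) ⋆ₗ[μ] fun y => g y ^ q) x ^ r⁻¹ *
      (∫⁻ y, f y ^ p ∂μ) ^ (p⁻¹ - r⁻¹) * (∫⁻ y, g y ^ q ∂μ) ^ (q⁻¹ - r⁻¹) := by
  have hr : 0 < r := hp.trans_le hpr
  have hgx : AEMeasurable (fun y => g (-y + x)) μ := by fun_prop
  have hg_eq : ∫⁻ y, g (-y + x) ^ q ∂μ = ∫⁻ y, g y ^ q ∂μ := by
    simpa only [neg_add_eq_sub] using lintegral_sub_left_eq_self (fun y => g y ^ q) x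
  have holder := ENNReal.lintegral_mul_prod_norm_pow_le (μ := μ) (Finset.univ : Finset (Fin 2))
    (g := fun y => f y ^ p * g (-y + x) ^ q) (f := ![fun y => f y ^ p, fun y => g (-y + x) ^ q])
    (by fun_prop) (by simpa [Fin.forall_fin_two] using ⟨hf.pow_const p, hgx.pow_const q⟩)
    r⁻¹ (p := ![p⁻¹ - r⁻¹, q⁻¹ - r⁻¹])
    (by simp only [Fin.sum_univ_two, Matrix.cons_val]; linarith) (by positivity)
    (by simpa [Fin.forall_fin_two] using ⟨inv_anti₀ hp hpr, inv_anti₀ hq hqr⟩)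
  simp only [Fin.prod_univ_two, Matrix.cons_val, hg_eq, ← mul_assoc] at holder
  refine le_trans (le_of_eq (lintegral_congr fun y => ?_)) holder
  rw [ENNReal.mul_rpow_of_nonneg _ _ (by positivity)]
  conv_lhs => rw [eq_rpow_rpow_mul_rpow_rpow (f y) hp hpr,
    eq_rpow_rpow_mul_rpow_rpow (g (-y + x)) hq hqr]
  ring

theorem lintegral_rpow_lconvolution_le {f g : G → ℝ≥0∞} (hf : AEMeasurable f μ)
    (hg : AEMeasurable g μ) {p q r : ℝ} (hp : 0 < p) (hq : 0 < q) (hpr : p ≤ r) (hqr : q ≤ r)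
    (h : p⁻¹ + q⁻¹ = r⁻¹ + 1) :
    (∫⁻ x, (f ⋆ₗ[μ] g) x ^ r ∂μ) ^ r⁻¹ ≤
      (∫⁻ x, f x ^ p ∂μ) ^ p⁻¹ * (∫⁻ x, g x ^ q ∂μ) ^ q⁻¹ := by
  have hr : 0 < r := hp.trans_le hpr
  set a := ∫⁻ x, f x ^ p ∂μ
  set b := ∫⁻ x, g x ^ q ∂μ
  set c := a ^ (p⁻¹ - r⁻¹) * b ^ (q⁻¹ - r⁻¹)
  have hpow : ∀ x, (f ⋆ₗ[μ] g) x ^ r ≤ ((fun y => f y ^ p) ⋆ₗ[μ] fun y => g y ^ q) x * c ^ r := by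
    intro x
    refine (ENNReal.rpow_le_rpow
      (lconvolution_le_rpow_mul_rpow_mul_rpow hf hg hp hq hpr hqr h x) hr.le).trans_eq ?_
    rw [mul_assoc, ENNReal.mul_rpow_of_nonneg _ _ hr.le, ENNReal.rpow_inv_rpow hr.ne']
  have key : ∫⁻ x, (f ⋆ₗ[μ] g) x ^ r ∂μ ≤ a * b * c ^ r := by
    refine (lintegral_mono hpow).trans_eq ?_
    rw [lintegral_mul_const'' _ (by fun_prop), lintegral_lconvolution (by fun_prop) (by fun_prop)]
  calc (∫⁻ x, (f ⋆ₗ[μ] g) x ^ r ∂μ) ^ r⁻¹ ≤ (a * b * c ^ r) ^ r⁻¹ := by gcongr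
    _ = (a ^ r⁻¹ * a ^ (p⁻¹ - r⁻¹)) * (b ^ r⁻¹ * b ^ (q⁻¹ - r⁻¹)) := by
        rw [ENNReal.mul_rpow_of_nonneg _ _ (by positivity),
          ENNReal.mul_rpow_of_nonneg _ _ (by positivity), ENNReal.rpow_rpow_inv hr.ne']
        ring
    _ = a ^ p⁻¹ * b ^ q⁻¹ := by
        rw [← ENNReal.rpow_add_of_nonneg _ _ (by positivity) (sub_nonneg.2 (inv_anti₀ hp hpr)),
          ← ENNReal.rpow_add_of_nonneg _ _ (by positivity) (sub_nonneg.2 (inv_anti₀ hq hqr)),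
          add_sub_cancel, add_sub_cancel]

theorem eLpNorm_lconvolution_le {f g : G → ℝ≥0∞} (hf : AEMeasurable f μ)
    (hg : AEMeasurable g μ) {p q r : ℝ≥0∞} (hp : 1 ≤ p) (hq : 1 ≤ q) (hr : r ≠ ∞)
    (h : p⁻¹ + q⁻¹ = r⁻¹ + 1) :
    eLpNorm (f ⋆ₗ[μ] g) r μ ≤ eLpNorm f p μ * eLpNorm g q μ := by
  have hpr : p ≤ r := le_of_inv_add_inv_eq_inv_add_one hq h
  have hqr : q ≤ r := le_of_inv_add_inv_eq_inv_add_one hp ((add_comm _ _).trans h)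
  lift r to ℝ≥0 using hr
  lift p to ℝ≥0 using ne_top_of_le_ne_top coe_ne_top hpr
  lift q to ℝ≥0 using ne_top_of_le_ne_top coe_ne_top hqr
  have hp0 : 0 < p := zero_lt_one.trans_le (mod_cast hp)
  have hq0 : 0 < q := zero_lt_one.trans_le (mod_cast hq)
  have hr0 : 0 < r := hp0.trans_le (mod_cast hpr)
  have hreal : (p : ℝ)⁻¹ + (q : ℝ)⁻¹ = (r : ℝ)⁻¹ + 1 := by
    rw [← ENNReal.coe_inv hp0.ne', ← ENNReal.coe_inv hq0.ne', ← ENNReal.coe_inv hr0.ne'] at h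
    exact_mod_cast h
  simpa only [eLpNorm_nnreal_eq_lintegral hp0.ne', eLpNorm_nnreal_eq_lintegral hq0.ne',
    eLpNorm_nnreal_eq_lintegral hr0.ne', enorm_eq_self, one_div] using
    lintegral_rpow_lconvolution_le hf hg (mod_cast hp0) (mod_cast hq0) (mod_cast hpr) (mod_cast hqr)
      hreal

theorem eLpNorm_convolution_le [NormedSpace ℝ F] {f : G → E} {g : G → E'} {p q r : ℝ≥0∞}
    (L : E →L[𝕜] E' →L[𝕜] F) (hf : AEStronglyMeasurable f μ)
    (hg : AEStronglyMeasurable g μ) (hp : 1 ≤ p) (hq : 1 ≤ q) (hr : r ≠ ∞)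
    (h : p⁻¹ + q⁻¹ = r⁻¹ + 1) :
    eLpNorm (f ⋆[L, μ] g) r μ ≤ ‖L‖ₑ * (eLpNorm f p μ * eLpNorm g q μ) := by
  calc eLpNorm (f ⋆[L, μ] g) r μ ≤ ‖L‖ₑ * eLpNorm ((‖f ·‖ₑ) ⋆ₗ[μ] (‖g ·‖ₑ)) r μ :=
        eLpNorm_le_mul_eLpNorm_of_ae_le_mul' (.of_forall fun x =>
          (enorm_integral_le_lintegral_enorm _).trans
            (lintegral_enorm_convolution_integrand_le L hf hg x)) r
    _ ≤ ‖L‖ₑ * (eLpNorm f p μ * eLpNorm g q μ) := by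
        gcongr
        simpa only [eLpNorm_enorm] using eLpNorm_lconvolution_le hf.enorm hg.enorm hp hq hr h

theorem ae_convolutionExistsAt {f : G → E} {g : G → E'} {p q r : ℝ≥0∞}
    (L : E →L[𝕜] E' →L[𝕜] F) (hf : MemLp f p μ) (hg : MemLp g q μ)
    (hp : 1 ≤ p) (hq : 1 ≤ q) (hr : r ≠ ∞) (h : p⁻¹ + q⁻¹ = r⁻¹ + 1) :
    ∀ᵐ x ∂μ, ConvolutionExistsAt f g x L μ := by
  have hf' := hf.aestronglyMeasurable
  have hg' := hg.aestronglyMeasurable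
  have hfin : eLpNorm ((‖f ·‖ₑ) ⋆ₗ[μ] (‖g ·‖ₑ)) r μ < ∞ := by
    refine (eLpNorm_lconvolution_le hf'.enorm hg'.enorm hp hq hr h).trans_lt ?_
    simpa only [eLpNorm_enorm] using ENNReal.mul_lt_top hf.2 hg.2
  have hr0 : r ≠ 0 := by
    rintro rfl
    have : p⁻¹ + q⁻¹ ≤ 1 + 1 := by gcongr <;> exact ENNReal.inv_le_one.2 ‹_›
    simp [h] at this
  filter_upwards [ae_lt_top_of_eLpNorm_lt_top (by fun_prop) hr0 hfin] with x hx
  exact ⟨hf'.convolution_integrand_snd L hg' x,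
    (lintegral_enorm_convolution_integrand_le L hf' hg' x).trans_lt
      (ENNReal.mul_lt_top enorm_lt_top hx)⟩

section Split

variable {f : G → E} {k : G → E'} {a b p : ℝ≥0∞} {s : Set G} (L : E →L[𝕜] E' →L[𝕜] F)

theorem ae_convolutionExistsAt_indicator (hs : MeasurableSet s) (hfb : MemLp f b μ)
    (hf1 : MemLp f 1 μ) (hka : MemLp k a (μ.restrict s)) (hkp : MemLp k p (μ.restrict sᶜ))
    (ha : 1 ≤ a) (hb : 1 ≤ b) (hp : p ≠ ∞) (h : b⁻¹ + a⁻¹ = p⁻¹ + 1) :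
    ∀ᵐ x ∂μ, ConvolutionExistsAt f (s.indicator k) x L μ ∧
      ConvolutionExistsAt f (sᶜ.indicator k) x L μ := by
  have hp1 : 1 ≤ p := hb.trans (le_of_inv_add_inv_eq_inv_add_one ha h)
  filter_upwards [
    ae_convolutionExistsAt L hfb ((memLp_indicator_iff_restrict hs).2 hka) hb ha hp h,
    ae_convolutionExistsAt L hf1 ((memLp_indicator_iff_restrict hs.compl).2 hkp) le_rfl hp1 hp
      (by rw [inv_one, add_comm])] with x hnear hfar using ⟨hnear, hfar⟩

theorem ae_convolutionExistsAt_of_memLp_restrict (hs : MeasurableSet s) (hfb : MemLp f b μ)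
    (hf1 : MemLp f 1 μ) (hka : MemLp k a (μ.restrict s)) (hkp : MemLp k p (μ.restrict sᶜ))
    (ha : 1 ≤ a) (hb : 1 ≤ b) (hp : p ≠ ∞) (h : b⁻¹ + a⁻¹ = p⁻¹ + 1) :
    ∀ᵐ x ∂μ, ConvolutionExistsAt f k x L μ := by
  filter_upwards [ae_convolutionExistsAt_indicator L hs hfb hf1 hka hkp ha hb hp h]
    with x ⟨hnear, hfar⟩
  refine (hnear.add hfar).congr (.of_forall fun t => ?_)
  simp only [Pi.add_apply, ← map_add, indicator_self_add_compl_apply]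

theorem eLpNorm_convolution_le_of_memLp_restrict [NormedSpace ℝ F] (hs : MeasurableSet s)
    (hfb : MemLp f b μ) (hf1 : MemLp f 1 μ) (hka : MemLp k a (μ.restrict s))
    (hkp : MemLp k p (μ.restrict sᶜ)) (ha : 1 ≤ a) (hb : 1 ≤ b) (hp : p ≠ ∞)
    (h : b⁻¹ + a⁻¹ = p⁻¹ + 1) :
    eLpNorm (f ⋆[L, μ] k) p μ ≤ ‖L‖ₑ * (eLpNorm f b μ * eLpNorm k a (μ.restrict s) +
      eLpNorm f 1 μ * eLpNorm k p (μ.restrict sᶜ)) := by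
  have hp1 : 1 ≤ p := hb.trans (le_of_inv_add_inv_eq_inv_add_one ha h)
  have hnear := ((memLp_indicator_iff_restrict hs).2 hka).aestronglyMeasurable
  have hfar := ((memLp_indicator_iff_restrict hs.compl).2 hkp).aestronglyMeasurable
  have hf := hf1.aestronglyMeasurable
  have hsplit : f ⋆[L, μ] k =ᵐ[μ] f ⋆[L, μ] s.indicator k + f ⋆[L, μ] sᶜ.indicator k := by
    filter_upwards [ae_convolutionExistsAt_indicator L hs hfb hf1 hka hkp ha hb hp h]
      with x hx
    rw [Pi.add_apply, ← hx.1.distrib_add hx.2, indicator_self_add_compl]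
  rw [eLpNorm_congr_ae hsplit, mul_add, ← eLpNorm_indicator_eq_eLpNorm_restrict hs,
    ← eLpNorm_indicator_eq_eLpNorm_restrict hs.compl]
  refine (eLpNorm_add_le (aestronglyMeasurable_convolution L hf hnear)
    (aestronglyMeasurable_convolution L hf hfar) hp1).trans (add_le_add ?_ ?_)
  · exact eLpNorm_convolution_le L hf hnear hb ha hp h
  · exact eLpNorm_convolution_le L hf hfar le_rfl hp1 hp (by rw [inv_one, add_comm])

end Split

end Young

/-! ### The kernel -/

section PowerKernel

variable {E F : Type*} [NormedAddCommGroup E] [NormedSpace ℝ E] [FiniteDimensional ℝ E]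
  [MeasurableSpace E] [BorelSpace E] {μ : Measure E} [μ.IsAddHaarMeasure]
  [NormedAddCommGroup F]

theorem memLp_restrict_ball_of_norm_le_rpow [Nontrivial E] {k : E → F} {C α : ℝ} {p : ℝ≥0∞}
    (hp : p ≠ ∞) (hpα : p.toReal * α < finrank ℝ E) (hk : AEStronglyMeasurable k μ)
    (hkα : ∀ x, ‖k x‖ ≤ C * ‖x‖ ^ (-α)) (r : ℝ) : MemLp k p (μ.restrict (Metric.ball 0 r)) := by
  rcases eq_or_ne p 0 with rfl | hp0
  · exact memLp_zero_iff_aestronglyMeasurable.2 hk.restrict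
  rw [← integrable_norm_rpow_iff hk.restrict hp0 hp]
  refine integrableOn_ball_of_norm_le_rpow (C := |C| ^ p.toReal) (α := p.toReal * α) finrank_pos hpα
    (.of_forall fun x => ?_) (hk.norm.aemeasurable.pow_const _).aestronglyMeasurable
  calc ‖‖k x‖ ^ p.toReal‖ = ‖k x‖ ^ p.toReal := Real.norm_of_nonneg (by positivity)
    _ ≤ (|C| * ‖x‖ ^ (-α)) ^ p.toReal := by
        gcongr
        exact (hkα x).trans (by gcongr; exact le_abs_self C)
    _ = |C| ^ p.toReal * ‖x‖ ^ (-(p.toReal * α)) := by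
        rw [Real.mul_rpow (by positivity) (by positivity), ← Real.rpow_mul (by positivity)]
        ring_nf

theorem memLp_restrict_compl_ball_of_norm_le_rpow {k : E → F} {C α : ℝ} {p : ℝ≥0∞}
    (hp : p ≠ ∞) (hpα : finrank ℝ E < p.toReal * α) (hk : AEStronglyMeasurable k μ)
    (hkα : ∀ x, ‖k x‖ ≤ C * ‖x‖ ^ (-α)) : MemLp k p (μ.restrict (Metric.ball 0 1)ᶜ) := by
  have hp0 : p ≠ 0 := by
    rintro rfl
    simp only [toReal_zero, zero_mul] at hpα
    exact hpα.not_ge (Nat.cast_nonneg _)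
  have hα : 0 < α :=
    pos_of_mul_pos_right ((Nat.cast_nonneg _).trans_lt hpα) toReal_nonneg
  have hdecay : MemLp (fun x : E => (1 + ‖x‖) ^ (-α)) p μ := by
    rw [← integrable_norm_rpow_iff (Measurable.aestronglyMeasurable (by fun_prop)) hp0 hp]
    refine (integrable_one_add_norm hpα).congr (.of_forall fun x => ?_)
    dsimp only
    rw [Real.norm_of_nonneg (by positivity), ← Real.rpow_mul (by positivity)]
    ring_nf
  refine (hdecay.restrict _).of_le_mul (c := |C| * 2 ^ α) hk.restrict ?_
  filter_upwards [ae_restrict_mem Metric.isOpen_ball.measurableSet.compl] with x hx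
  have hx1 : 1 ≤ ‖x‖ := by simpa using hx
  calc ‖k x‖ ≤ |C| * ‖x‖ ^ (-α) := (hkα x).trans (by gcongr; exact le_abs_self C)
    _ ≤ |C| * ((1 + ‖x‖) / 2) ^ (-α) := by
        gcongr |C| * ?_
        exact Real.rpow_le_rpow_of_nonpos (by positivity) (by linarith) (by linarith)
    _ = |C| * 2 ^ α * ‖(1 + ‖x‖) ^ (-α)‖ := by
        rw [Real.norm_of_nonneg (by positivity), Real.div_rpow (by positivity) zero_le_two,
          Real.rpow_neg zero_le_two, div_inv_eq_mul]
        ring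

theorem eLpNorm_comp_smul (f : E → F) {p : ℝ≥0∞} {c : ℝ} (hc : c ≠ 0) :
    eLpNorm (fun x => f (c • x)) p μ =
      ENNReal.ofReal |(c ^ finrank ℝ E)⁻¹| ^ (1 / p).toReal * eLpNorm f p μ := by
  have hscale : ENNReal.ofReal |(c ^ finrank ℝ E)⁻¹| ≠ 0 := by positivity
  rw [← smul_eq_mul, ← eLpNorm_smul_measure_of_ne_zero hscale, ← Measure.map_addHaar_smul μ hc]
  exact (MeasurableEquiv.smul₀ c hc).measurableEmbedding.eLpNorm_map_measure.symm

end PowerKernel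

section AharonovBohm

theorem norm_perp (x : E2) : ‖perp x‖ = ‖x‖ := by
  simp [perp, EuclideanSpace.norm_eq, Fin.sum_univ_two, add_comm]

theorem perp_smul (c : ℝ) (x : E2) : perp (c • x) = c • perp x := by
  ext i
  fin_cases i <;> simp [perp]

theorem continuous_perp : Continuous perp := by
  refine (PiLp.continuous_toLp 2 _).comp (continuous_pi fun i => ?_)
  fin_cases i
  · exact (PiLp.continuous_apply 2 _ 1).neg
  · exact PiLp.continuous_apply 2 _ 0

theorem measurable_K (R : ℝ) : Measurable (K R) := by
  have hscalar : Measurable fun x : E2 => (max R ‖x‖ ^ 2)⁻¹ := by fun_prop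
  exact hscalar.smul continuous_perp.measurable

theorem norm_K_le (R : ℝ) (x : E2) : ‖K R x‖ ≤ ‖x‖⁻¹ := by
  rcases eq_or_ne x 0 with rfl | hx
  · simp [K, perp]
  calc ‖K R x‖ = (max R ‖x‖ ^ 2)⁻¹ * ‖x‖ := by
        rw [K, norm_smul, norm_perp, Real.norm_of_nonneg (by positivity)]
    _ ≤ (‖x‖ ^ 2)⁻¹ * ‖x‖ := by gcongr; exact le_max_right R ‖x‖
    _ = ‖x‖⁻¹ := by field_simp [norm_ne_zero_iff.2 hx]

theorem K_mul_smul (R : ℝ) {c : ℝ} (hc : 0 < c) (x : E2) : K (c * R) (c • x) = c⁻¹ • K R x := by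
  rw [K, K, norm_smul, Real.norm_of_nonneg hc.le, ← mul_max_of_nonneg _ _ hc.le, perp_smul,
    smul_smul, smul_smul]
  congr 1
  field_simp

theorem memLp_K_restrict_ball (R : ℝ) {p : ℝ≥0∞} (hp : p < 2) (r : ℝ) :
    MemLp (K R) p (volume.restrict (Metric.ball 0 r)) := by
  refine memLp_restrict_ball_of_norm_le_rpow (C := 1) (α := 1) hp.ne_top ?_
    (measurable_K R).aestronglyMeasurable (fun x => ?_) r
  · simpa using (toReal_lt_toReal hp.ne_top ofNat_ne_top).2 hp
  · simpa only [one_mul, Real.rpow_neg_one] using norm_K_le R x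

theorem memLp_K_restrict_compl_ball (R : ℝ) {p : ℝ≥0∞} (hp : 2 < p) (hp' : p ≠ ∞) :
    MemLp (K R) p (volume.restrict (Metric.ball 0 1)ᶜ) := by
  refine memLp_restrict_compl_ball_of_norm_le_rpow (C := 1) (α := 1) hp' ?_
    (measurable_K R).aestronglyMeasurable (fun x => ?_)
  · simpa using (toReal_lt_toReal ofNat_ne_top hp').2 hp
  · simpa only [one_mul, Real.rpow_neg_one] using norm_K_le R x

theorem K_eq_K_zero_of_le_norm {R : ℝ} {x : E2} (hx : R ≤ ‖x‖) : K R x = K 0 x := by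
  rw [K, K, max_eq_right hx, max_eq_right (norm_nonneg x)]

theorem memLp_one_K_zero_sub_K (R : ℝ) : MemLp (K 0 - K R) 1 := by
  have hsupport : (Metric.ball 0 R).indicator (K 0 - K R) = K 0 - K R :=
    indicator_eq_self.2 <| Function.support_subset_iff'.2 fun x hx =>
      sub_eq_zero.2 (K_eq_K_zero_of_le_norm (by simpa using hx)).symm
  rw [← hsupport, memLp_indicator_iff_restrict measurableSet_ball]
  exact (memLp_K_restrict_ball 0 one_lt_two R).sub (memLp_K_restrict_ball R one_lt_two R)

theorem eLpNorm_one_K_zero_sub_K {R : ℝ} (hR : 0 ≤ R) :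
    eLpNorm (K 0 - K R) 1 volume = ENNReal.ofReal R * eLpNorm (K 0 - K 1) 1 volume := by
  rcases hR.eq_or_lt with rfl | hR
  · simp
  have hscale : K 0 - K R = R⁻¹ • fun x => (K 0 - K 1) (R⁻¹ • x) := by
    funext x
    have h0 := K_mul_smul 0 hR (R⁻¹ • x)
    have h1 := K_mul_smul 1 hR (R⁻¹ • x)
    rw [mul_zero, smul_inv_smul₀ hR.ne'] at h0
    rw [mul_one, smul_inv_smul₀ hR.ne'] at h1
    simp only [Pi.sub_apply, Pi.smul_apply, h0, h1, smul_sub]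
  rw [hscale, eLpNorm_const_smul, eLpNorm_comp_smul _ (inv_ne_zero hR.ne'), ← mul_assoc,
    ← ofReal_norm, finrank_euclideanSpace_fin, div_one, toReal_one, rpow_one,
    ← ofReal_mul (norm_nonneg _), Real.norm_of_nonneg (by positivity),
    abs_of_nonneg (by positivity)]
  congr 2
  field_simp

end AharonovBohm

/-! ### The Gagliardo–Nirenberg inequality -/

section Slices

variable {ι : Type*} [Fintype ι] [DecidableEq ι] {X : ι → Type*} [∀ i, MeasurableSpace (X i)]
  {μ : ∀ i, Measure (X i)} [∀ i, SigmaFinite (μ i)]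

theorem ae_lintegral_update_lt_top {g : (∀ i, X i) → ℝ≥0∞} (hg : Measurable g)
    (hint : ∫⁻ x, g x ∂Measure.pi μ ≠ ∞) (i : ι) :
    ∀ᵐ x ∂Measure.pi μ, ∫⁻ t, g (Function.update x i t) ∂μ i < ∞ := by
  obtain ⟨w, hw_pos, hw, hw_int⟩ := exists_pos_lintegral_lt_of_sigmaFinite (μ i) one_ne_zero
  have hslice : Measurable fun x => ∫⁻ t, g (Function.update x i t) ∂μ i := by
    rw [← lmarginal_singleton]
    exact hg.lmarginal μ
  have hweighted : Measurable fun x => w (x i) * ∫⁻ t, g (Function.update x i t) ∂μ i :=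
    (hw.coe_nnreal_ennreal.comp (measurable_pi_apply i)).mul hslice
  have hfubini : ∫⁻ x, w (x i) * ∫⁻ t, g (Function.update x i t) ∂μ i ∂Measure.pi μ =
      ∫⁻ x, (∫⁻ t, w t ∂μ i) * g x ∂Measure.pi μ := by
    refine lintegral_eq_of_lmarginal_eq {i} hweighted (by fun_prop) ?_
    simp only [lmarginal_singleton, Function.update_self, Function.update_idem]
    funext x
    rw [lintegral_mul_const _ (by fun_prop), lintegral_const_mul _ (by fun_prop)]
  have hfin : ∫⁻ x, w (x i) * ∫⁻ t, g (Function.update x i t) ∂μ i ∂Measure.pi μ ≠ ∞ := by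
    rw [hfubini, lintegral_const_mul _ hg]
    exact ENNReal.mul_ne_top hw_int.ne_top hint
  filter_upwards [ae_lt_top hweighted hfin] with x hx
  exact ENNReal.lt_top_of_mul_ne_top_right hx.ne (by simpa using (hw_pos (x i)).ne')

theorem ae_memLp_comp_update {F : Type*} [NormedAddCommGroup F] {f : (∀ i, X i) → F} {p : ℝ≥0∞}
    (hf : StronglyMeasurable f) (hp : p ≠ ∞) (hfp : MemLp f p (Measure.pi μ)) (i : ι) :
    ∀ᵐ x ∂Measure.pi μ, MemLp (fun t => f (Function.update x i t)) p (μ i) := by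
  have hmeas : ∀ x, AEStronglyMeasurable (fun t => f (Function.update x i t)) (μ i) := fun x =>
    (hf.comp_measurable (measurable_update x)).aestronglyMeasurable
  rcases eq_or_ne p 0 with rfl | hp0
  · exact .of_forall fun x => memLp_zero_iff_aestronglyMeasurable.2 (hmeas x)
  have hfin := lintegral_rpow_enorm_lt_top_of_eLpNorm_lt_top hp0 hp hfp.2
  filter_upwards [ae_lintegral_update_lt_top (hf.enorm.pow_const _) hfin.ne i] with x hx
  exact ⟨hmeas x, (eLpNorm_lt_top_iff_lintegral_rpow_enorm_lt_top hp0 hp).2 hx⟩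

end Slices

section Line

theorem tendsto_atBot_zero_of_memLp_two {F : Type*} [NormedAddCommGroup F] [InnerProductSpace ℝ F]
    {u : ℝ → F} (hu : Differentiable ℝ u) (hu2 : MemLp u 2) (hu2' : MemLp (deriv u) 2) :
    Tendsto u atBot (𝓝 0) := by
  have hderiv : ∀ t, HasDerivAt (fun t => ‖u t‖ ^ 2) (2 * ⟪u t, deriv u t⟫) t := fun t =>
    (hu t).hasDerivAt.norm_sq
  have hint : Integrable fun t => ⟪u t, deriv u t⟫ :=
    (hu2.norm.integrable_mul hu2'.norm).mono
      (hu2.aestronglyMeasurable.inner hu2'.aestronglyMeasurable) (.of_forall fun t => by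
        simpa using norm_inner_le_norm (𝕜 := ℝ) (u t) (deriv u t))
  have hsq : Tendsto (fun t => ‖u t‖ ^ 2) atBot (𝓝 0) :=
    tendsto_zero_of_hasDerivAt_of_integrableOn_Iic (a := 0) (fun t _ => hderiv t)
      (hint.const_mul 2).integrableOn ((memLp_two_iff_integrable_sq_norm hu2.1).1 hu2).integrableOn
  rw [tendsto_zero_iff_norm_tendsto_zero]
  simpa using hsq.sqrt

theorem enorm_le_lintegral_enorm_deriv {F : Type*} [NormedAddCommGroup F] [NormedSpace ℝ F]
    [CompleteSpace F] {u : ℝ → F} (hu : Differentiable ℝ u) (h0 : Tendsto u atBot (𝓝 0)) (x : ℝ) :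
    ‖u x‖ₑ ≤ ∫⁻ t, ‖deriv u t‖ₑ := by
  by_cases hfin : ∫⁻ t, ‖deriv u t‖ₑ = ∞
  · exact hfin ▸ le_top
  have hint : Integrable (deriv u) :=
    ⟨(stronglyMeasurable_deriv u).aestronglyMeasurable, lt_top_iff_ne_top.2 hfin⟩
  have hftc := integral_Iic_of_hasDerivAt_of_tendsto' (fun t _ => (hu t).hasDerivAt)
    (hint.integrableOn (s := Iic x)) h0
  rw [sub_zero] at hftc
  rw [← hftc]
  exact (enorm_integral_le_lintegral_enorm _).trans (setLIntegral_le_lintegral _ _)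

end Line

section GagliardoNirenberg

variable {ι : Type*} [DecidableEq ι] {F : Type*}

theorem hasDerivAt_comp_toLp_update [Finite ι] [NormedAddCommGroup F] [NormedSpace ℝ F]
    {f : EuclideanSpace ℝ ι → F} (hf : Differentiable ℝ f) (x : ι → ℝ) (i : ι) (t : ℝ) :
    HasDerivAt (fun t => f (WithLp.toLp 2 (Function.update x i t)))
      (fderiv ℝ f (WithLp.toLp 2 (Function.update x i t)) (EuclideanSpace.single i 1)) t :=
  have := Fintype.ofFinite ι
  (hf _).hasFDerivAt.comp_hasDerivAt t
    ((PiLp.continuousLinearEquiv 2 ℝ fun _ : ι => ℝ).symm.hasFDerivAt.comp_hasDerivAt t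
      (hasDerivAt_update x i t))

variable [Fintype ι]

/-- The function `f` *vanishes on lines* if it tends to zero at `-∞` along almost every line
parallel to a coordinate axis. This is the decay at infinity that the Gagliardo–Nirenberg
inequality needs. The lines of direction `i` are indexed by all the points `x` they contain, rather
than by the hyperplane `x i = 0`, so that "almost every" refers to the measure of `ι → ℝ`. -/
def VanishesOnLines [NormedAddCommGroup F] (f : EuclideanSpace ℝ ι → F) : Prop :=
  ∀ i, ∀ᵐ x : ι → ℝ,
    Tendsto (fun t => f (WithLp.toLp 2 (Function.update x i t))) atBot (𝓝 0)

section NormedSpace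

variable [NormedAddCommGroup F] [NormedSpace ℝ F] {f : EuclideanSpace ℝ ι → F}

theorem norm_deriv_comp_toLp_update_le (hf : Differentiable ℝ f) (x : ι → ℝ) (i : ι) (t : ℝ) :
    ‖deriv (fun t => f (WithLp.toLp 2 (Function.update x i t))) t‖ ≤
      ‖fderiv ℝ f (WithLp.toLp 2 (Function.update x i t))‖ := by
  rw [(hasDerivAt_comp_toLp_update hf x i t).deriv]
  exact (fderiv ℝ f _).le_of_opNorm_le_of_le le_rfl (by simp) |>.trans_eq (mul_one _)

theorem VanishesOnLines.lintegral_rpow_le [CompleteSpace F] {p : ℝ}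
    (hp : Real.HolderConjugate (Fintype.card ι) p) (hf : Differentiable ℝ f)
    (h0 : VanishesOnLines f) :
    ∫⁻ x, ‖f x‖ₑ ^ p ≤ (∫⁻ x, ‖fderiv ℝ f x‖ₑ) ^ p := by
  have hcard : (1 : ℝ) < Fintype.card ι := hp.lt
  have hlines : ∀ᵐ x : ι → ℝ, ∀ i, ‖f (WithLp.toLp 2 x)‖ₑ ≤
      ∫⁻ t, ‖fderiv ℝ f (WithLp.toLp 2 (Function.update x i t))‖ₑ := by
    filter_upwards [ae_all_iff.2 h0] with x hx i
    have hline : Differentiable ℝ fun t => f (WithLp.toLp 2 (Function.update x i t)) := fun t =>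
      (hasDerivAt_comp_toLp_update hf x i t).differentiableAt
    calc ‖f (WithLp.toLp 2 x)‖ₑ = ‖f (WithLp.toLp 2 (Function.update x i (x i)))‖ₑ := by
          rw [Function.update_eq_self]
      _ ≤ ∫⁻ t, ‖deriv (fun t => f (WithLp.toLp 2 (Function.update x i t))) t‖ₑ :=
          enorm_le_lintegral_enorm_deriv hline (hx i) (x i)
      _ ≤ _ := lintegral_mono fun t =>
          enorm_le_iff_norm_le.2 (norm_deriv_comp_toLp_update_le hf x i t)
  have hf_meas : Measurable fun x => ‖f x‖ₑ ^ p := hf.continuous.enorm.measurable.pow_const p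
  have hf'_meas : Measurable fun x => ‖fderiv ℝ f x‖ₑ := (measurable_fderiv ℝ f).enorm
  rw [← (PiLp.volume_preserving_toLp ι).lintegral_comp hf_meas,
    ← (PiLp.volume_preserving_toLp ι).lintegral_comp hf'_meas]
  calc ∫⁻ x : ι → ℝ, ‖f (WithLp.toLp 2 x)‖ₑ ^ p
      = ∫⁻ x : ι → ℝ, ∏ _i : ι, ‖f (WithLp.toLp 2 x)‖ₑ ^ (1 / (Fintype.card ι - 1 : ℝ)) := by
        refine lintegral_congr fun x => ?_
        rw [Finset.prod_const, Finset.card_univ, ← ENNReal.rpow_mul_natCast, hp.conjugate_eq]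
        congr 1
        ring
    _ ≤ ∫⁻ x : ι → ℝ, ∏ i, (∫⁻ t, ‖fderiv ℝ f (WithLp.toLp 2 (Function.update x i t))‖ₑ) ^
          (1 / (Fintype.card ι - 1 : ℝ)) := by
        refine lintegral_mono_ae (hlines.mono fun x hx => ?_)
        gcongr with i
        exact hx i
    _ ≤ (∫⁻ x : ι → ℝ, ‖fderiv ℝ f (WithLp.toLp 2 x)‖ₑ) ^ p :=
        lintegral_prod_lintegral_pow_le _ hp (hf'_meas.comp (WithLp.measurable_toLp 2 _))

theorem VanishesOnLines.eLpNorm_le [CompleteSpace F] {p : ℝ≥0}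
    (hp : Real.HolderConjugate (Fintype.card ι) p) (hf : Differentiable ℝ f)
    (h0 : VanishesOnLines f) :
    eLpNorm f p volume ≤ eLpNorm (fderiv ℝ f) 1 volume := by
  have hp0 : p ≠ 0 := mod_cast hp.symm.ne_zero
  rw [eLpNorm_nnreal_eq_lintegral hp0, eLpNorm_one_eq_lintegral_enorm, one_div,
    ENNReal.rpow_inv_le_iff hp.symm.pos]
  exact h0.lintegral_rpow_le hp hf

end NormedSpace

theorem vanishesOnLines_of_memLp_two [NormedAddCommGroup F] [InnerProductSpace ℝ F]
    [CompleteSpace F] {f : EuclideanSpace ℝ ι → F} (hf : Differentiable ℝ f) (hf2 : MemLp f 2)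
    (hf2' : MemLp (fderiv ℝ f) 2) : VanishesOnLines f := by
  intro i
  have hmp := PiLp.volume_preserving_toLp ι
  have hf_slice := ae_memLp_comp_update (hf.continuous.stronglyMeasurable.comp_measurable
    hmp.measurable) ofNat_ne_top (hf2.comp_measurePreserving hmp) i
  have hf'_slice := ae_memLp_comp_update
    ((measurable_fderiv ℝ f).norm.stronglyMeasurable.comp_measurable hmp.measurable) ofNat_ne_top
    (hf2'.norm.comp_measurePreserving hmp) i
  filter_upwards [hf_slice, hf'_slice] with x hx hx'
  exact tendsto_atBot_zero_of_memLp_two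
    (fun t => (hasDerivAt_comp_toLp_update hf x i t).differentiableAt) hx
    (hx'.of_le (stronglyMeasurable_deriv _).aestronglyMeasurable (.of_forall fun t => by
      simpa using norm_deriv_comp_toLp_update_le hf x i t))

end GagliardoNirenberg

/-! ### The Sobolev embedding -/

section Powers

variable {α : Type*} [MeasurableSpace α] {μ : Measure α}

theorem eLpNorm_le_max_of_le_of_le {F : Type*} [NormedAddCommGroup F] {f : α → F} {p q r : ℝ≥0}
    (hf : AEStronglyMeasurable f μ) (hp : p ≠ 0) (hpq : p ≤ q) (hqr : q ≤ r) :
    eLpNorm f q μ ≤ max (eLpNorm f p μ) (eLpNorm f r μ) := by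
  have hp_pos : 0 < p := pos_iff_ne_zero.2 hp
  have hq_pos : 0 < q := hp_pos.trans_le hpq
  have hr_pos : 0 < r := hq_pos.trans_le hqr
  obtain ⟨s, t, hs, ht, hst, hconv⟩ : (q : ℝ) ∈ segment ℝ (p : ℝ) r :=
    Icc_subset_segment ⟨mod_cast hpq, mod_cast hqr⟩
  simp only [smul_eq_mul] at hconv
  set M := max (eLpNorm f p μ) (eLpNorm f r μ)
  have hp_le : ∫⁻ x, ‖f x‖ₑ ^ (p : ℝ) ∂μ ≤ M ^ (p : ℝ) := by
    rw [← eLpNorm_nnreal_pow_eq_lintegral hp]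
    gcongr
    exact le_max_left _ _
  have hr_le : ∫⁻ x, ‖f x‖ₑ ^ (r : ℝ) ∂μ ≤ M ^ (r : ℝ) := by
    rw [← eLpNorm_nnreal_pow_eq_lintegral hr_pos.ne']
    gcongr
    exact le_max_right _ _
  rw [← ENNReal.rpow_le_rpow_iff (z := q) (mod_cast hq_pos),
    eLpNorm_nnreal_pow_eq_lintegral hq_pos.ne']
  calc ∫⁻ x, ‖f x‖ₑ ^ (q : ℝ) ∂μ
      = ∫⁻ x, (‖f x‖ₑ ^ (p : ℝ)) ^ s * (‖f x‖ₑ ^ (r : ℝ)) ^ t ∂μ := by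
        refine lintegral_congr fun x => ?_
        rw [← ENNReal.rpow_mul, ← ENNReal.rpow_mul,
          ← ENNReal.rpow_add_of_nonneg _ _ (by positivity) (by positivity), ← hconv]
        ring_nf
    _ ≤ (∫⁻ x, ‖f x‖ₑ ^ (p : ℝ) ∂μ) ^ s * (∫⁻ x, ‖f x‖ₑ ^ (r : ℝ) ∂μ) ^ t :=
        ENNReal.lintegral_mul_norm_pow_le (hf.enorm.pow_const _) (hf.enorm.pow_const _) hs ht hst
    _ ≤ (M ^ (p : ℝ)) ^ s * (M ^ (r : ℝ)) ^ t := by gcongr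
    _ = M ^ (q : ℝ) := by
        rw [← ENNReal.rpow_mul, ← ENNReal.rpow_mul,
          ← ENNReal.rpow_add_of_nonneg _ _ (by positivity) (by positivity), ← hconv]
        ring_nf

theorem memLp_of_le_of_le {F : Type*} [NormedAddCommGroup F] {f : α → F} {p q r : ℝ≥0∞}
    (hfp : MemLp f p μ) (hfr : MemLp f r μ) (hp : p ≠ 0) (hr : r ≠ ∞) (hpq : p ≤ q)
    (hqr : q ≤ r) : MemLp f q μ := by
  lift r to ℝ≥0 using hr
  lift q to ℝ≥0 using (hqr.trans_lt coe_lt_top).ne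
  lift p to ℝ≥0 using (hpq.trans_lt coe_lt_top).ne
  exact ⟨hfp.1, (eLpNorm_le_max_of_le_of_le hfp.1 (mod_cast hp) (mod_cast hpq)
    (mod_cast hqr)).trans_lt (max_lt hfp.2 hfr.2)⟩

theorem eLpNorm_norm_pow {F : Type*} [NormedAddCommGroup F] (f : α → F) (p : ℝ≥0∞) {n : ℕ}
    (hn : n ≠ 0) : eLpNorm (fun x => ‖f x‖ ^ n) p μ = eLpNorm f (p * n) μ ^ n := by
  simpa using eLpNorm_norm_rpow (p := p) (μ := μ) f (Nat.cast_pos.2 (pos_iff_ne_zero.2 hn))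

theorem memLp_norm_pow {F : Type*} [NormedAddCommGroup F] {f : α → F} {p : ℝ≥0∞} {n : ℕ}
    (hn : n ≠ 0) (hf : MemLp f (p * n) μ) : MemLp (fun x => ‖f x‖ ^ n) p μ :=
  ⟨hf.1.norm.pow n, by simpa only [eLpNorm_norm_pow f p hn] using ENNReal.pow_lt_top hf.2⟩

theorem memLp_norm_sq_of_le {F : Type*} [NormedAddCommGroup F] {f : α → F} {p q : ℝ≥0∞}
    (hf2 : MemLp f 2 μ) (hfp : MemLp f (2 * p) μ) (hp : p ≠ ∞) (hq : 1 ≤ q) (hqp : q ≤ p) :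
    MemLp (fun x => ‖f x‖ ^ 2) q μ := by
  have hlow : 2 ≤ 2 * q := le_mul_of_one_le_right' hq
  have hhigh : 2 * q ≤ 2 * p := by gcongr
  refine memLp_norm_pow two_ne_zero ?_
  rw [Nat.cast_ofNat, mul_comm]
  exact memLp_of_le_of_le hf2 hfp two_ne_zero (ENNReal.mul_ne_top ofNat_ne_top hp) hlow hhigh

theorem eLpNorm_pow {A : Type*} [NormedDivisionRing A] (f : α → A) (p : ℝ≥0∞) {n : ℕ}
    (hn : n ≠ 0) : eLpNorm (f ^ n) p μ = eLpNorm f (p * n) μ ^ n := by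
  rw [← eLpNorm_norm_pow f p hn, ← eLpNorm_norm]
  simp only [Pi.pow_apply, norm_pow]

end Powers

section Sobolev

theorem eLpNorm_one_fderiv_pow_succ_le {E A : Type*} [NormedAddCommGroup E] [NormedSpace ℝ E]
    [MeasurableSpace E] [OpensMeasurableSpace E] [NormedField A] [NormedAlgebra ℝ A]
    [CompleteSpace A] {μ : Measure E} {f : E → A} (hf : Differentiable ℝ f) (n : ℕ) :
    eLpNorm (fderiv ℝ (f ^ (n + 1))) 1 μ ≤
      (n + 1) * eLpNorm (f ^ n) 2 μ * eLpNorm (fderiv ℝ f) 2 μ := by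
  have hpow : ∀ x, ‖fderiv ℝ (f ^ (n + 1)) x‖ ≤ (n + 1 : ℕ) * ‖(f ^ n) x‖ * ‖fderiv ℝ f x‖ := by
    intro x
    rw [fderiv_pow _ (hf x), Nat.add_sub_cancel, norm_smul]
    gcongr
    exact norm_nsmul_le
  have holder := eLpNorm_le_eLpNorm_mul_eLpNorm'_of_norm (p := 2) (q := 2) (r := 1) (μ := μ)
    (hf.pow n).continuous.norm.aestronglyMeasurable
    (measurable_fderiv ℝ f).norm.aestronglyMeasurable
    (fun a b => (n + 1 : ℕ) * a * b) (n + 1 : ℕ) (.of_forall fun x => by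
      simp only [norm_mul, norm_norm, Real.norm_natCast, NNReal.coe_natCast, le_refl])
  refine (eLpNorm_mono_real hpow).trans (holder.trans_eq ?_)
  rw [eLpNorm_norm, eLpNorm_norm]
  push_cast
  rfl

theorem VanishesOnLines.pow_succ {ι A : Type*} [Fintype ι] [DecidableEq ι] [NormedRing A]
    {f : EuclideanSpace ℝ ι → A} (h : VanishesOnLines f) (n : ℕ) :
    VanishesOnLines (f ^ (n + 1)) := fun i =>
  (h i).mono fun x hx => by simpa using hx.pow (n + 1)

variable {A : Type*} [NormedField A] [NormedAlgebra ℝ A] [CompleteSpace A] {f : E2 → A}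

theorem VanishesOnLines.eLpNorm_pow_succ_le (hf : Differentiable ℝ f) (h : VanishesOnLines f)
    (n : ℕ) :
    eLpNorm (f ^ (n + 1)) 2 volume ≤
      (n + 1).factorial * (eLpNorm f 2 volume * eLpNorm (fderiv ℝ f) 2 volume ^ n) := by
  induction n with
  | zero => simp
  | succ n ih =>
    calc eLpNorm (f ^ (n + 2)) 2 volume ≤ eLpNorm (fderiv ℝ (f ^ (n + 2))) 1 volume :=
          (h.pow_succ (n + 1)).eLpNorm_le (p := 2) ⟨by norm_num, by norm_num, by norm_num⟩
            (hf.pow (n + 2))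
      _ ≤ (n + 2) * eLpNorm (f ^ (n + 1)) 2 volume * eLpNorm (fderiv ℝ f) 2 volume := by
          refine (eLpNorm_one_fderiv_pow_succ_le hf (n + 1)).trans_eq ?_
          push_cast
          ring
      _ ≤ (n + 2) * ((n + 1).factorial * (eLpNorm f 2 volume * eLpNorm (fderiv ℝ f) 2 volume ^ n)) *
          eLpNorm (fderiv ℝ f) 2 volume := by gcongr
      _ = _ := by
          rw [Nat.factorial_succ (n + 1)]
          push_cast
          ring

theorem VanishesOnLines.eLpNorm_le_factorial_mul (hf : Differentiable ℝ f) (h : VanishesOnLines f)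
    {n : ℕ} {q : ℝ≥0} (hq : 2 ≤ q) (hqn : q ≤ 2 * (n + 1)) :
    eLpNorm f q volume ≤
      (n + 1).factorial * max (eLpNorm f 2 volume) (eLpNorm (fderiv ℝ f) 2 volume) := by
  set M := max (eLpNorm f 2 volume) (eLpNorm (fderiv ℝ f) 2 volume)
  have hfact : 1 ≤ ((n + 1).factorial : ℝ≥0∞) := mod_cast Nat.factorial_pos (n + 1)
  have hhigh : eLpNorm f (2 * (n + 1 : ℕ)) volume ≤ (n + 1).factorial * M := by
    refine (ENNReal.pow_le_pow_left_iff n.succ_ne_zero).1 ?_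
    calc _ = eLpNorm (f ^ (n + 1)) 2 volume := (eLpNorm_pow f 2 n.succ_ne_zero).symm
      _ ≤ (n + 1).factorial * (M * M ^ n) := by
          refine (h.eLpNorm_pow_succ_le hf n).trans ?_
          gcongr
          exacts [le_max_left _ _, le_max_right _ _]
      _ ≤ (n + 1).factorial ^ (n + 1) * M ^ (n + 1) := by
          rw [← pow_succ']
          gcongr
          exact le_self_pow hfact n.succ_ne_zero
      _ = _ := (mul_pow _ _ _).symm
  have hinterp := eLpNorm_le_max_of_le_of_le (μ := volume)
    hf.continuous.aestronglyMeasurable two_ne_zero hq hqn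
  refine hinterp.trans (max_le ?_ (mod_cast hhigh))
  exact (le_max_left _ _).trans (le_mul_of_one_le_left' hfact)

end Sobolev

section H1

variable {u : E2 → ℂ}

theorem eLpNorm_two_le_H1 (u : E2 → ℂ) : eLpNorm u 2 volume ≤ H1 u := by
  rw [H1, one_div, ENNReal.le_rpow_inv_iff two_pos, ENNReal.rpow_two]
  exact le_self_add

theorem eLpNorm_two_fderiv_le_H1 (u : E2 → ℂ) : eLpNorm (fderiv ℝ u) 2 volume ≤ H1 u := by
  rw [H1, one_div, ENNReal.le_rpow_inv_iff two_pos, ENNReal.rpow_two]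
  exact le_add_self

theorem vanishesOnLines_of_H1_lt_top (hu : Differentiable ℝ u) (hH : H1 u < ∞) :
    VanishesOnLines u :=
  vanishesOnLines_of_memLp_two hu
    ⟨hu.continuous.aestronglyMeasurable, (eLpNorm_two_le_H1 u).trans_lt hH⟩
    ⟨(measurable_fderiv ℝ u).aestronglyMeasurable, (eLpNorm_two_fderiv_le_H1 u).trans_lt hH⟩

theorem exists_eLpNorm_le_mul_H1 {q : ℝ≥0∞} (hq : 2 ≤ q) (hq' : q ≠ ∞) :
    ∃ C : ℝ≥0, ∀ u : E2 → ℂ, Differentiable ℝ u → H1 u < ∞ → eLpNorm u q volume ≤ C * H1 u := by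
  lift q to ℝ≥0 using hq'
  obtain ⟨n, hn⟩ := exists_nat_ge q
  refine ⟨(n + 1).factorial, fun u hu hH => ?_⟩
  have hqn : q ≤ 2 * (n + 1) := hn.trans (by norm_cast; lia)
  refine ((vanishesOnLines_of_H1_lt_top hu hH).eLpNorm_le_factorial_mul hu (mod_cast hq)
    hqn).trans ?_
  push_cast
  gcongr
  exact max_le (eLpNorm_two_le_H1 u) (eLpNorm_two_fderiv_le_H1 u)

theorem exists_eLpNorm_two_add_eLpNorm_le_mul_H1 {q : ℝ≥0∞} (hq : 2 ≤ q) (hq' : q ≠ ∞) :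
    ∃ C : ℝ≥0, ∀ u : E2 → ℂ, Differentiable ℝ u → H1 u < ∞ →
      eLpNorm u 2 volume + eLpNorm u q volume ≤ C * H1 u := by
  obtain ⟨C, hC⟩ := exists_eLpNorm_le_mul_H1 hq hq'
  refine ⟨1 + C, fun u hu hH => ?_⟩
  rw [coe_add, coe_one, add_mul, one_mul]
  exact add_le_add (eLpNorm_two_le_H1 u) (hC u hu hH)

theorem memLp_of_H1_lt_top (hu : Differentiable ℝ u) (hH : H1 u < ∞) {q : ℝ≥0∞} (hq : 2 ≤ q)
    (hq' : q ≠ ∞) : MemLp u q := by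
  obtain ⟨C, hC⟩ := exists_eLpNorm_le_mul_H1 hq hq'
  exact ⟨hu.continuous.aestronglyMeasurable,
    (hC u hu hH).trans_lt (ENNReal.mul_lt_top coe_lt_top hH)⟩

end H1

theorem eLpNorm_norm_sq_sub_norm_sq_le {α F : Type*} [MeasurableSpace α] {μ : Measure α}
    [NormedAddCommGroup F] {u v : α → F} {p q r : ℝ≥0∞} [HolderTriple p q r]
    (hu : AEStronglyMeasurable u μ) (hv : AEStronglyMeasurable v μ) (hp : 1 ≤ p) :
    eLpNorm (fun x => ‖u x‖ ^ 2 - ‖v x‖ ^ 2) r μ ≤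
      (eLpNorm u p μ + eLpNorm v p μ) * eLpNorm (u - v) q μ := by
  have hfactor : ∀ x, ‖‖u x‖ ^ 2 - ‖v x‖ ^ 2‖ ≤ (‖u x‖ + ‖v x‖) * ‖(u - v) x‖ := fun x => by
    rw [sq_sub_sq, norm_mul, Real.norm_of_nonneg (by positivity)]
    gcongr
    exact abs_norm_sub_norm_le _ _
  calc eLpNorm (fun x => ‖u x‖ ^ 2 - ‖v x‖ ^ 2) r μ
      ≤ eLpNorm ((fun x => ‖u x‖ + ‖v x‖) • fun x => ‖(u - v) x‖) r μ := eLpNorm_mono_real hfactor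
    _ ≤ eLpNorm (fun x => ‖u x‖ + ‖v x‖) p μ * eLpNorm (fun x => ‖(u - v) x‖) q μ :=
        eLpNorm_smul_le_mul_eLpNorm (hu.sub hv).norm (hu.norm.add hv.norm)
    _ ≤ (eLpNorm u p μ + eLpNorm v p μ) * eLpNorm (u - v) q μ := by
        rw [eLpNorm_norm (u - v), ← eLpNorm_norm u, ← eLpNorm_norm v]
        gcongr
        exact eLpNorm_add_le hu.norm hv.norm hp

theorem exists_holderTriple_two_mul {p : ℝ≥0∞} (hp : 1 ≤ p) (hp' : p ≠ ∞) :
    ∃ s, HolderTriple (2 * p) 2 s ∧ 1 ≤ s ∧ s < 2 ∧ s⁻¹ + s⁻¹ = p⁻¹ + 1 := by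
  have hinv : (2 * p)⁻¹ = 2⁻¹ * p⁻¹ := ENNReal.mul_inv (by simp) (by simp)
  refine ⟨((2 * p)⁻¹ + 2⁻¹)⁻¹, ⟨(inv_inv _).symm⟩, ?_, ?_, ?_⟩
  · rw [ENNReal.one_le_inv, ← ENNReal.inv_two_add_inv_two]
    gcongr
    exact le_mul_of_one_le_right' hp
  · rw [ENNReal.inv_lt_iff_inv_lt, add_comm]
    exact ENNReal.lt_add_right (by simp) (by simp [ENNReal.mul_eq_top, hp'])
  · rw [inv_inv, add_add_add_comm, ENNReal.inv_two_add_inv_two, hinv, ← add_mul,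
      ENNReal.inv_two_add_inv_two, one_mul]

theorem convolution_sub_convolution_eq {𝕜 G E E' F : Type*} [NontriviallyNormedField 𝕜]
    [AddGroup G] [MeasurableSpace G] {μ : Measure G} [NormedAddCommGroup E] [NormedSpace 𝕜 E]
    [NormedAddCommGroup E'] [NormedSpace 𝕜 E'] [NormedAddCommGroup F] [NormedSpace 𝕜 F]
    [NormedSpace ℝ F] {L : E →L[𝕜] E' →L[𝕜] F} {f g : G → E} {k l : G → E'} {x : G}
    (hfk : ConvolutionExistsAt f k x L μ) (hgk : ConvolutionExistsAt g k x L μ)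
    (hgl : ConvolutionExistsAt g l x L μ) :
    (f ⋆[L, μ] k) x - (g ⋆[L, μ] l) x = ((f - g) ⋆[L, μ] k) x + (g ⋆[L, μ] (k - l)) x := by
  have hsub_left : ((f - g) ⋆[L, μ] k) x = (f ⋆[L, μ] k) x - (g ⋆[L, μ] k) x := by
    simp only [convolution_def, Pi.sub_apply, map_sub, sub_apply]
    exact integral_sub hfk hgk
  have hsub_right : (g ⋆[L, μ] (k - l)) x = (g ⋆[L, μ] k) x - (g ⋆[L, μ] l) x := by
    simp only [convolution_def, Pi.sub_apply, map_sub]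
    exact integral_sub hgk hgl
  rw [hsub_left, hsub_right, sub_add_sub_cancel]

/-! ### Comparison of the convolutions -/

section Comparison

variable {p s : ℝ≥0∞}

theorem ae_convolutionExistsAt_K (R : ℝ) {ρ : E2 → ℝ} (hρs : MemLp ρ s) (hρ1 : MemLp ρ 1)
    (hp : 2 < p) (hp' : p ≠ ∞) (hs : 1 ≤ s) (hs' : s < 2) (h : s⁻¹ + s⁻¹ = p⁻¹ + 1) :
    ∀ᵐ x, ConvolutionExistsAt ρ (K R) x (lsmul ℝ ℝ) volume :=
  ae_convolutionExistsAt_of_memLp_restrict _ Metric.isOpen_ball.measurableSet hρs hρ1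
    (memLp_K_restrict_ball R hs' 1) (memLp_K_restrict_compl_ball R hp hp') hs hs hp' h

theorem exists_eLpNorm_convolution_K_le (R : ℝ) (hp : 2 < p) (hp' : p ≠ ∞) (hs : 1 ≤ s)
    (hs' : s < 2) (h : s⁻¹ + s⁻¹ = p⁻¹ + 1) :
    ∃ C : ℝ≥0, ∀ ρ : E2 → ℝ, MemLp ρ s → MemLp ρ 1 →
      eLpNorm (ρ ⋆[lsmul ℝ ℝ, volume] K R) p volume ≤
        C * (eLpNorm ρ s volume + eLpNorm ρ 1 volume) := by
  have hnear := memLp_K_restrict_ball R hs' 1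
  have hfar := memLp_K_restrict_compl_ball R hp hp'
  lift eLpNorm (K R) s (volume.restrict (Metric.ball 0 1)) to ℝ≥0 using hnear.2.ne with A hA
  lift eLpNorm (K R) p (volume.restrict (Metric.ball 0 1)ᶜ) to ℝ≥0 using hfar.2.ne with B hB
  refine ⟨‖lsmul ℝ ℝ (E := E2)‖₊ * max A B, fun ρ hρs hρ1 => ?_⟩
  refine (eLpNorm_convolution_le_of_memLp_restrict _ Metric.isOpen_ball.measurableSet hρs hρ1
    hnear hfar hs hs hp' h).trans ?_
  rw [← hA, ← hB, coe_mul, mul_assoc, ← enorm_eq_nnnorm, mul_add ((max A B : ℝ≥0) : ℝ≥0∞),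
    mul_comm _ (A : ℝ≥0∞), mul_comm _ (B : ℝ≥0∞)]
  gcongr
  exacts [le_max_left A B, le_max_right A B]

theorem exists_eLpNorm_convolution_K_zero_sub_K_le (hp : 1 ≤ p) (hp' : p ≠ ∞) :
    ∃ C : ℝ≥0, ∀ R : ℝ, 0 ≤ R → ∀ σ : E2 → ℝ, AEStronglyMeasurable σ →
      eLpNorm (σ ⋆[lsmul ℝ ℝ, volume] (K 0 - K R)) p volume ≤
        C * (ENNReal.ofReal R * eLpNorm σ p volume) := by
  lift eLpNorm (K 0 - K 1) 1 volume to ℝ≥0 using (memLp_one_K_zero_sub_K 1).2.ne with A hA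
  refine ⟨‖lsmul ℝ ℝ (E := E2)‖₊ * A, fun R hR σ hσ => ?_⟩
  refine (eLpNorm_convolution_le _ hσ (memLp_one_K_zero_sub_K R).aestronglyMeasurable hp le_rfl hp'
    (by rw [inv_one])).trans_eq ?_
  rw [eLpNorm_one_K_zero_sub_K hR, ← hA, coe_mul, ← enorm_eq_nnnorm]
  ring

theorem exists_eLpNorm_convKs_zero_sub_convKs_le (hp : 2 < p) (hp' : p ≠ ∞) (hs : 1 ≤ s)
    (hs' : s < 2) (h : s⁻¹ + s⁻¹ = p⁻¹ + 1) :
    ∃ C : ℝ≥0, ∀ R : ℝ, 0 ≤ R → ∀ ρ σ : E2 → ℝ, MemLp ρ s → MemLp ρ 1 → MemLp σ s → MemLp σ 1 →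
      eLpNorm (fun x => convKs 0 ρ x - convKs R σ x) p volume ≤
        C * (ENNReal.ofReal R * eLpNorm σ p volume +
          (eLpNorm (ρ - σ) s volume + eLpNorm (ρ - σ) 1 volume)) := by
  have hp1 : 1 ≤ p := one_le_two.trans hp.le
  obtain ⟨A, hA⟩ := exists_eLpNorm_convolution_K_le 0 hp hp' hs hs' h
  obtain ⟨B, hB⟩ := exists_eLpNorm_convolution_K_zero_sub_K_le hp1 hp'
  refine ⟨max A B, fun R hR ρ σ hρs hρ1 hσs hσ1 => ?_⟩
  have hsplit : (fun x => convKs 0 ρ x - convKs R σ x) =ᵐ[volume]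
      σ ⋆[lsmul ℝ ℝ, volume] (K 0 - K R) + (ρ - σ) ⋆[lsmul ℝ ℝ, volume] K 0 := by
    filter_upwards [ae_convolutionExistsAt_K 0 hρs hρ1 hp hp' hs hs' h,
      ae_convolutionExistsAt_K 0 hσs hσ1 hp hp' hs hs' h,
      ae_convolutionExistsAt_K R hσs hσ1 hp hp' hs hs' h] with x hρ0 hσ0 hσR
    exact (convolution_sub_convolution_eq hρ0 hσ0 hσR).trans (add_comm _ _)
  have hdiff := (hρ1.sub hσ1).aestronglyMeasurable
  calc eLpNorm (fun x => convKs 0 ρ x - convKs R σ x) p volume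
      ≤ eLpNorm (σ ⋆[lsmul ℝ ℝ, volume] (K 0 - K R)) p volume +
          eLpNorm ((ρ - σ) ⋆[lsmul ℝ ℝ, volume] K 0) p volume := by
        rw [eLpNorm_congr_ae hsplit]
        exact eLpNorm_add_le (aestronglyMeasurable_convolution _ hσ1.aestronglyMeasurable
          (memLp_one_K_zero_sub_K R).aestronglyMeasurable)
          (aestronglyMeasurable_convolution _ hdiff (measurable_K 0).aestronglyMeasurable) hp1
    _ ≤ B * (ENNReal.ofReal R * eLpNorm σ p volume) +
          A * (eLpNorm (ρ - σ) s volume + eLpNorm (ρ - σ) 1 volume) :=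
        add_le_add (hB R hR σ hσ1.aestronglyMeasurable) (hA _ (hρs.sub hσs) (hρ1.sub hσ1))
    _ ≤ _ := by
        rw [mul_add ((max A B : ℝ≥0) : ℝ≥0∞)]
        gcongr
        exacts [le_max_right A B, le_max_left A B]

theorem exists_eLpNorm_convKs_norm_sq_sub_le {F : Type*} [NormedAddCommGroup F] (hp : 2 < p)
    (hp' : p ≠ ∞) :
    ∃ C : ℝ≥0, ∀ R : ℝ, 0 ≤ R → ∀ u v : E2 → F, MemLp u 2 → MemLp u (2 * p) → MemLp v 2 →
      MemLp v (2 * p) →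
      eLpNorm (fun x => convKs 0 (fun y => ‖u y‖ ^ 2) x - convKs R (fun y => ‖v y‖ ^ 2) x) p
          volume ≤
        C * (ENNReal.ofReal R * eLpNorm v (2 * p) volume ^ 2 +
          (eLpNorm u 2 volume + eLpNorm u (2 * p) volume +
            (eLpNorm v 2 volume + eLpNorm v (2 * p) volume)) * eLpNorm (u - v) 2 volume) := by
  have hp1 : 1 ≤ p := one_le_two.trans hp.le
  obtain ⟨s, _, hs, hs', hsp⟩ := exists_holderTriple_two_mul hp1 hp'
  obtain ⟨C, hC⟩ := exists_eLpNorm_convKs_zero_sub_convKs_le hp hp' hs hs' hsp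
  have hsp_le : s ≤ p := hs'.le.trans hp.le
  refine ⟨C, fun R hR u v hu hu' hv hv' => ?_⟩
  have hconv := hC R hR _ _ (memLp_norm_sq_of_le hu hu' hp' hs hsp_le)
    (memLp_norm_sq_of_le hu hu' hp' le_rfl hp1) (memLp_norm_sq_of_le hv hv' hp' hs hsp_le)
    (memLp_norm_sq_of_le hv hv' hp' le_rfl hp1)
  refine hconv.trans ?_
  rw [eLpNorm_norm_pow v p two_ne_zero, Nat.cast_ofNat, mul_comm p 2, add_add_add_comm,
    add_comm (eLpNorm u 2 volume + _), add_mul (eLpNorm u _ volume + _)]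
  gcongr
  · exact eLpNorm_norm_sq_sub_norm_sq_le hu.1 hv.1 (hp1.trans (le_mul_of_one_le_left' one_le_two))
  · exact eLpNorm_norm_sq_sub_norm_sq_le hu.1 hv.1 one_le_two

end Comparison

/-- Lemma 2.1, eq. (2.3), case `s = 0`: for `2 < p < ∞` there is `C_p > 0` such that
`‖K₀ ∗ |u|² − K_R ∗ |v|²‖_p ≤ C_p (‖v‖_{H¹}² R + (‖u‖_{H¹} + ‖v‖_{H¹}) ‖u − v‖₂)`
for all `R ≥ 0` and `u, v ∈ H¹(ℝ², ℂ)`. -/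
theorem statement1 (p : ℝ) (hp : 2 < p) :
    ∃ C : ℝ, 0 < C ∧
      ∀ R : ℝ, 0 ≤ R → ∀ u v : E2 → ℂ,
        Differentiable ℝ u → H1 u < ⊤ → Differentiable ℝ v → H1 v < ⊤ →
        eLpNorm
            (fun x => convKs 0 (fun y => ‖u y‖ ^ 2) x - convKs R (fun y => ‖v y‖ ^ 2) x)
            (ENNReal.ofReal p) volume
          ≤ ENNReal.ofReal C *
              (H1 v ^ 2 * ENNReal.ofReal R + (H1 u + H1 v) * eLpNorm (u - v) 2 volume) := by
  have hP : 2 < ENNReal.ofReal p := by simpa using ofReal_lt_ofReal_iff'.2 ⟨hp, two_pos.trans hp⟩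
  have hP2 : 2 ≤ 2 * ENNReal.ofReal p := le_mul_of_one_le_right' (one_le_two.trans hP.le)
  have hP2' : 2 * ENNReal.ofReal p ≠ ∞ := ENNReal.mul_ne_top ofNat_ne_top ofReal_ne_top
  obtain ⟨A, hA⟩ := exists_eLpNorm_convKs_norm_sq_sub_le (F := ℂ) hP ofReal_ne_top
  obtain ⟨B, hB⟩ := exists_eLpNorm_two_add_eLpNorm_le_mul_H1 hP2 hP2'
  refine ⟨((A + 1) * (1 + B) ^ 2 : ℝ≥0), by positivity, fun R hR u v hu hHu hv hHv => ?_⟩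
  have hB1 : (B : ℝ≥0∞) ≤ 1 + B := le_add_self
  have hB2 : (B : ℝ≥0∞) ≤ (1 + B) ^ 2 := hB1.trans (le_self_pow le_self_add two_ne_zero)
  calc _ ≤ A * (ENNReal.ofReal R * (B * H1 v) ^ 2 +
          (B * H1 u + B * H1 v) * eLpNorm (u - v) 2 volume) := by
        refine (hA R hR u v (memLp_of_H1_lt_top hu hHu le_rfl ofNat_ne_top)
          (memLp_of_H1_lt_top hu hHu hP2 hP2') (memLp_of_H1_lt_top hv hHv le_rfl ofNat_ne_top)
          (memLp_of_H1_lt_top hv hHv hP2 hP2')).trans ?_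
        gcongr
        exacts [le_add_self.trans (hB v hv hHv), hB u hu hHu, hB v hv hHv]
    _ ≤ (A + 1) * (ENNReal.ofReal R * ((1 + B) * H1 v) ^ 2 +
          ((1 + B) ^ 2 * H1 u + (1 + B) ^ 2 * H1 v) * eLpNorm (u - v) 2 volume) := by
        gcongr
        exact le_self_add
    _ = _ := by
        rw [ofReal_coe_nnreal]
        push_cast
        ring
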